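/- arXiv:0809.0159 — 3 statements merged into one kernel-verified Lean document; each statement's English description precedes it below -/
import Mathlib

section
/- Let f : ℝ → ℝ be a terrain and let a < b < c < d be four real numbers. If a sees c and b sees d, then a sees d. -/
/-- `a` sees `b` on the terrain `f`: the straight segment joining `(a, f a)` and
`(b, f b)` never goes strictly below the graph of `f`. -/
def Sees (f : ℝ → ℝ) (a b : ℝ) : Prop :=
  ∀ t ∈ Set.Icc (0:ℝ) 1, f ((1 - t) * a + t * b) ≤ (1 - t) * f a + t * f b

/-!
Visibility is unaffected by subtracting an affine function from the terrain, so we may assume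
that `f a = f d = 0`, and it suffices to show `f ≤ max (f a) (f d)` on `[a, d]`. If `f c` exceeded
this maximum, then `f b < f c` because `a` sees `c`, so both ends of the segment from `b` to `d`
would lie below `f c`, although `b` sees `d`. Hence `f c`, and then `f b`, is at most the maximum,
and the two segments carry the bound over to `[a, c]` and `[b, d]`, which cover `[a, d]`.
-/

section

variable {f : ℝ → ℝ} {a b c d x : ℝ}

theorem Sees.le_max (h : Sees f a b) (hx : x ∈ Set.Icc a b) : f x ≤ max (f a) (f b) := by
  rw [← segment_eq_Icc (hx.1.trans hx.2), segment_eq_image] at hx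
  obtain ⟨t, ht, rfl⟩ := hx
  exact (h t ht).trans
    (Convex.combo_le_max (f a) (f b) (sub_nonneg.2 ht.2) ht.1 (sub_add_cancel 1 t))

theorem Sees.lt_right_of_lt (h : Sees f a b) (hx : x ∈ Set.Ico a b) (hlt : f a < f b) :
    f x < f b := by
  have hx_segment : x ∈ segment ℝ a b := Icc_subset_segment (Set.Ico_subset_Icc_self hx)
  rw [segment_eq_image] at hx_segment
  obtain ⟨t, ht, rfl⟩ := hx_segment
  have ht_ne_one : t ≠ 1 := by
    rintro rfl
    simp at hx
  have ht_lt_one : t < 1 := ht.2.lt_of_ne ht_ne_one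
  calc f ((1 - t) * a + t * b) ≤ (1 - t) * f a + t * f b := h t ht
    _ < (1 - t) * f b + t * f b := by gcongr
    _ = f b := by ring

theorem Sees.le_max_of_crossing (hac : Sees f a c) (hbd : Sees f b d)
    (hab : a ≤ b) (hbc : b < c) (hcd : c ≤ d) (hx : x ∈ Set.Icc a d) :
    f x ≤ max (f a) (f d) := by
  have hfc : f c ≤ max (f a) (f d) := by
    by_contra! hlt
    obtain ⟨hfa, hfd⟩ := max_lt_iff.1 hlt
    have hfb : f b < f c := hac.lt_right_of_lt ⟨hab, hbc⟩ hfa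
    exact (hbd.le_max ⟨hbc.le, hcd⟩).not_gt (max_lt hfb hfd)
  have hfb : f b ≤ max (f a) (f d) :=
    (hac.le_max ⟨hab, hbc.le⟩).trans (max_le (le_max_left _ _) hfc)
  rcases le_total x c with hxc | hcx
  · exact (hac.le_max ⟨hx.1, hxc⟩).trans (max_le (le_max_left _ _) hfc)
  · exact (hbd.le_max ⟨hbc.le.trans hcx, hx.2⟩).trans (max_le hfb (le_max_right _ _))

theorem sees_sub_affine_iff (m k : ℝ) : Sees (fun y ↦ f y - (m * y + k)) a b ↔ Sees f a b := by
  refine forall₂_congr fun t _ ↦ ?_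
  constructor <;> intro h <;> linarith

theorem sees_of_eq_of_forall_le (hab : a ≤ b) (heq : f a = f b)
    (hle : ∀ y ∈ Set.Icc a b, f y ≤ f b) : Sees f a b := by
  intro t ht
  have hmem : (1 - t) * a + t * b ∈ Set.Icc a b := by
    rw [← segment_eq_Icc hab, segment_eq_image]
    exact ⟨t, ht, rfl⟩
  calc f ((1 - t) * a + t * b) ≤ f b := hle _ hmem
    _ = (1 - t) * f a + t * f b := by rw [heq]; ring

theorem exists_affine_eq_and_eq (f : ℝ → ℝ) (a b : ℝ) :
    ∃ m k : ℝ, f a = m * a + k ∧ f b = m * b + k := by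
  have hslope : (b - a) * slope f a b = f b - f a := sub_smul_slope f a b
  exact ⟨slope f a b, f a - slope f a b * a, by ring, by linarith⟩

end

theorem order_claim (f : ℝ → ℝ) (a b c d : ℝ)
    (hab : a < b) (hbc : b < c) (hcd : c < d)
    (hac : Sees f a c) (hbd : Sees f b d) : Sees f a d := by
  have had : a < d := hab.trans (hbc.trans hcd)
  obtain ⟨m, k, hfa, hfd⟩ := exists_affine_eq_and_eq f a d
  rw [← sees_sub_affine_iff m k] at hac hbd ⊢
  set g : ℝ → ℝ := fun y ↦ f y - (m * y + k)
  have hga : g a = 0 := sub_eq_zero.2 hfa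
  have hgd : g d = 0 := sub_eq_zero.2 hfd
  refine sees_of_eq_of_forall_le had.le (hga.trans hgd.symm) fun x hx ↦ ?_
  simpa only [hga, hgd, max_self] using hac.le_max_of_crossing hbd hab.le hbc hcd.le hx
end

section
/- Let f : ℝ → ℝ be a terrain, let p : Fin m → ℝ be strictly increasing (the points ordered left to right) and let g : Fin n → ℝ be strictly decreasing (the guards ordered right to left). Define the 0–1 matrix M by M i j = 1 if g j < p i and g j sees p i, and M i j = 0 otherwise. Then M is in standard greedy form: there are no indices i₁ < i₂ and j₁ < j₂ with M i₁ j₁ = 1, M i₁ j₂ = 1, M i₂ j₁ = 1 and M i₂ j₂ = 0. -/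
open scoped Classical

/-! The key fact is the order claim: if `a < b < c < d`, `a` sees `c` and `b` sees `d`, then `a`
sees `d`. Visibility is invariant under shearing the terrain, so we may assume `f a = f d`. If
`f b > f a`, then, as `b` lies on or below the chord from `a` to `c`, `f c > f b > f d`; but then
`c` lies above the chord from `b` to `d`. Hence `f b ≤ f a`, and symmetrically `f c ≤ f a`. The
chords over `[a, c]` and `[b, d]` therefore keep the terrain at or below level `f a` on all of
`[a, d]`. -/

section Sees

variable {f : ℝ → ℝ} {a b c d x : ℝ}

lemma sees_iff_forall_add_eq_one :
    Sees f a b ↔ ∀ s t : ℝ, 0 ≤ s → 0 ≤ t → s + t = 1 → f (s * a + t * b) ≤ s * f a + t * f b := by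
  constructor
  · intro h s t hs ht hst
    obtain rfl : s = 1 - t := by linarith
    exact h t ⟨ht, by linarith⟩
  · rintro h t ⟨ht₀, ht₁⟩
    exact h (1 - t) t (by linarith) ht₀ (by ring)

lemma Sees.symm (h : Sees f a b) : Sees f b a := by
  rw [sees_iff_forall_add_eq_one] at h ⊢
  intro s t hs ht hst
  simpa only [add_comm] using h t s ht hs (by linarith)

lemma Sees.le_max_of_mem_segment (h : Sees f a b) (hx : x ∈ segment ℝ a b) :
    f x ≤ max (f a) (f b) := by
  obtain ⟨s, t, hs, ht, hst, rfl⟩ := hx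
  calc f (s * a + t * b) ≤ s * f a + t * f b := sees_iff_forall_add_eq_one.mp h s t hs ht hst
    _ ≤ max (f a) (f b) := Convex.combo_le_max _ _ hs ht hst

lemma Sees.lt_right_of_left_lt (h : Sees f a b) (hx : x ∈ openSegment ℝ a b) (hax : f a < f x) :
    f x < f b := by
  obtain ⟨s, t, hs, ht, hst, rfl⟩ := hx
  simp only [smul_eq_mul] at hax ⊢
  by_contra! hbx
  refine lt_irrefl (f (s * a + t * b)) ?_
  calc f (s * a + t * b) ≤ s * f a + t * f b :=
        sees_iff_forall_add_eq_one.mp h s t hs.le ht.le hst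
    _ < s * f (s * a + t * b) + t * f (s * a + t * b) :=
        add_lt_add_of_lt_of_le (by gcongr) (by gcongr)
    _ = f (s * a + t * b) := by rw [← add_mul, hst, one_mul]

lemma Sees.lt_left_of_right_lt (h : Sees f a b) (hx : x ∈ openSegment ℝ a b) (hbx : f b < f x) :
    f x < f a :=
  h.symm.lt_right_of_left_lt (openSegment_symm ℝ a b ▸ hx) hbx

lemma sees_of_forall_mem_segment_le_min (h : ∀ x ∈ segment ℝ a b, f x ≤ min (f a) (f b)) :
    Sees f a b :=
  sees_iff_forall_add_eq_one.mpr fun s t hs ht hst =>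
    (h _ ⟨s, t, hs, ht, hst, rfl⟩).trans (Convex.min_le_combo _ _ hs ht hst)

lemma sees_sub_mul_iff (k : ℝ) : Sees (fun x => f x - k * x) a b ↔ Sees f a b :=
  forall₂_congr fun t _ => by constructor <;> intro h <;> linarith

lemma sees_of_crossing_of_eq (hab : a < b) (hbc : b < c) (hcd : c < d) (hac : Sees f a c)
    (hbd : Sees f b d) (had : f a = f d) : Sees f a d := by
  have hb : b ∈ openSegment ℝ a c := Ioo_subset_openSegment ⟨hab, hbc⟩
  have hc : c ∈ openSegment ℝ b d := Ioo_subset_openSegment ⟨hbc, hcd⟩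
  have lt_of_lt_b (h : f a < f b) : f b < f c := hac.lt_right_of_left_lt hb h
  have lt_of_lt_c (h : f a < f c) : f c < f b := hbd.lt_left_of_right_lt hc (had ▸ h)
  have hfb : f b ≤ f a := not_lt.mp fun h =>
    (lt_of_lt_b h).asymm (lt_of_lt_c (h.trans (lt_of_lt_b h)))
  have hfc : f c ≤ f a := not_lt.mp fun h =>
    (lt_of_lt_c h).asymm (lt_of_lt_b (h.trans (lt_of_lt_c h)))
  refine sees_of_forall_mem_segment_le_min fun x hx => ?_
  rw [← had, min_self]
  rw [segment_eq_Icc (hab.trans (hbc.trans hcd)).le] at hx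
  rcases le_total x c with hxc | hcx
  · exact (hac.le_max_of_mem_segment (Icc_subset_segment ⟨hx.1, hxc⟩)).trans
      (max_le le_rfl hfc)
  · exact (hbd.le_max_of_mem_segment (Icc_subset_segment ⟨hbc.le.trans hcx, hx.2⟩)).trans
      (max_le hfb had.ge)

lemma sees_of_crossing (hab : a ≤ b) (hbc : b < c) (hcd : c ≤ d) (hac : Sees f a c)
    (hbd : Sees f b d) : Sees f a d := by
  rcases hab.eq_or_lt with rfl | hab
  · exact hbd
  rcases hcd.eq_or_lt with rfl | hcd
  · exact hac
  rw [← sees_sub_mul_iff (slope f a d)] at hac hbd ⊢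
  refine sees_of_crossing_of_eq hab hbc hcd hac hbd ?_
  have hslope : (d - a) * slope f a d = f d - f a := sub_smul_slope f a d
  linarith

end Sees

theorem left_visibility_standard_greedy_form_general (f : ℝ → ℝ) {ι κ R : Type*}
    [Preorder ι] [Preorder κ] [Zero R] [One R] [NeZero (1 : R)]
    (p : ι → ℝ) (g : κ → ℝ) (hp : Monotone p) (hg : Antitone g) (M : ι → κ → R)
    (hM : ∀ i j, M i j = if g j < p i ∧ Sees f (g j) (p i) then 1 else 0) :
    ∀ i₁ i₂ j₁ j₂, i₁ ≤ i₂ → j₁ ≤ j₂ →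
      ¬ (M i₁ j₁ = 1 ∧ M i₁ j₂ = 1 ∧ M i₂ j₁ = 1 ∧ M i₂ j₂ = 0) := by
  rintro i₁ i₂ j₁ j₂ hi hj ⟨h₁₁, h₁₂, h₂₁, h₂₂⟩
  have eq_one_iff (i j) : M i j = 1 ↔ g j < p i ∧ Sees f (g j) (p i) := by simp [hM]
  rw [eq_one_iff] at h₁₁ h₁₂ h₂₁
  have hsees : Sees f (g j₂) (p i₂) := sees_of_crossing (hg hj) h₁₁.1 (hp hi) h₁₂.2 h₂₁.2
  have h₂₂' : M i₂ j₂ = 1 := (eq_one_iff _ _).mpr ⟨h₁₂.1.trans_le (hp hi), hsees⟩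
  exact one_ne_zero (h₂₂'.symm.trans h₂₂)

/-- Ordering points left to right and guards right to left puts the
left-visibility matrix in standard greedy form. -/
theorem left_visibility_standard_greedy_form (f : ℝ → ℝ) {m n : ℕ}
    (p : Fin m → ℝ) (g : Fin n → ℝ)
    (hp : StrictMono p) (hg : StrictAnti g)
    (M : Fin m → Fin n → ℕ)
    (hM : ∀ i j, M i j = if g j < p i ∧ Sees f (g j) (p i) then 1 else 0) :
    ∀ i₁ i₂ j₁ j₂, i₁ < i₂ → j₁ < j₂ →
      ¬ (M i₁ j₁ = 1 ∧ M i₁ j₂ = 1 ∧ M i₂ j₁ = 1 ∧ M i₂ j₂ = 0) :=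
  fun i₁ i₂ j₁ j₂ hi hj => left_visibility_standard_greedy_form_general f p g hp.monotone
    hg.antitone M hM i₁ i₂ j₁ j₂ hi.le hj.le
end

section
/- The integrality gap of the covering LP for discrete terrain guarding is at least 3/2: there exist a terrain f : ℝ → ℝ, a finite set of guards G ⊆ ℝ and a finite set of points N ⊆ ℝ with G ∩ N = ∅, and a nonnegative function x : G → ℝ with Σ_{g ∈ G, g sees p} x(g) ≥ 1 for every p ∈ N, such that some A ⊆ G sees every point of N, and every A ⊆ G with the property that each p ∈ N is seen by some g ∈ A satisfies |A| ≥ (3/2)·Σ_{g ∈ G} x(g). -/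
open scoped Classical

/-!
On a suitable terrain there are four guards and six points such that every pair of guards is exactly
the set of guards seeing one of the points. Weight `1/2` on each guard is then a fractional cover of
value `2`, whereas an integral cover is a vertex cover of the complete graph `K₄` on the guards and
so uses at least three of them.

The terrain is the upper envelope of tents of a common slope `L` erected over finitely many apexes.
If the heights of the apexes are themselves `L`-Lipschitz, the envelope passes through every apex,
and a chord between two apexes is never steeper than the tents. Such a chord therefore clears the
whole terrain as soon as it clears the apexes above which it passes, which for integral apexes is a
decidable condition.
-/

namespace TerrainGuarding

section Covering

variable {α β : Type*} {G : Finset α}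

lemma one_le_sum_ite_half {P : α → Prop} (hP : 2 ≤ (G.filter P).card) :
    (1 : ℝ) ≤ ∑ g ∈ G, if P g then 1 / 2 else 0 := by
  have hcard : (2 : ℝ) ≤ (G.filter P).card := by exact_mod_cast hP
  rw [← Finset.sum_filter, Finset.sum_const, nsmul_eq_mul]
  linarith

lemma card_le_card_add_one_of_cover {N : Finset β} {S : α → β → Prop}
    (hpair : ∀ g ∈ G, ∀ g' ∈ G, g ≠ g' → ∃ p ∈ N, ∀ k ∈ G, S k p → k = g ∨ k = g')
    {A : Finset α} (hA : A ⊆ G) (hcover : ∀ p ∈ N, ∃ g ∈ A, S g p) :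
    G.card ≤ A.card + 1 := by
  have homitted : (G \ A).card ≤ 1 := by
    refine Finset.card_le_one.2 fun g hg g' hg' => ?_
    rw [Finset.mem_sdiff] at hg hg'
    by_contra hne
    obtain ⟨p, hp, honly⟩ := hpair g hg.1 g' hg'.1 hne
    obtain ⟨k, hk, hkp⟩ := hcover p hp
    rcases honly k (hA hk) hkp with rfl | rfl
    · exact hg.2 hk
    · exact hg'.2 hk
  rw [Finset.card_sdiff_of_subset hA] at homitted
  omega

end Covering

section Unobstructed

variable {ι R : Type*} [CommRing R] [LinearOrder R]

/-- No vertex `(x k, h k)` whose abscissa lies between those of the vertices `a` and `b` is strictly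
above the chord joining these two. The inequality is multiplied by `(x b - x a) ^ 2`, which avoids
division and makes it symmetric in `a` and `b`; it is trivial when `x a = x b`. -/
def Unobstructed (x h : ι → R) (a b : ι) : Prop :=
  ∀ k, x k ∈ Set.uIcc (x a) (x b) →
    (x b - x a) ^ 2 * h k ≤ (x b - x a) * ((x b - x k) * h a + (x k - x a) * h b)

instance [Fintype ι] (x h : ι → R) (a b : ι) : Decidable (Unobstructed x h a b) :=
  inferInstanceAs (Decidable (∀ k, x k ∈ Set.Icc (x a ⊓ x b) (x a ⊔ x b) → _ ≤ _))

lemma unobstructed_intCast (x h : ι → ℤ) (a b : ι) :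
    Unobstructed (fun i => (x i : ℝ)) (fun i => (h i : ℝ)) a b ↔ Unobstructed x h a b := by
  simp only [Unobstructed, Set.mem_uIcc]
  norm_cast

lemma sees_iff_unobstructed {f : ℝ → ℝ} {a b : ℝ} : Sees f a b ↔ Unobstructed id f a b := by
  rcases eq_or_ne a b with rfl | hab
  · simp [Sees, Unobstructed, ← add_mul]
  have hpos : 0 < (b - a) ^ 2 := by
    have := sub_ne_zero.2 hab.symm
    positivity
  simp only [Sees, Unobstructed, id_eq]
  rw [← segment_eq_uIcc, segment_eq_image, Set.forall_mem_image]
  refine forall₂_congr fun t _ => ?_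
  rw [← mul_le_mul_iff_right₀ hpos]
  simp only [smul_eq_mul]
  ring_nf

end Unobstructed

section TentEnvelope

variable {ι : Type*} {x h : ι → ℝ} {L : ℝ}

lemma tent_le_tent_of_between (hL : ∀ i j, |h i - h j| ≤ L * |x i - x j|) {i j : ι} {y : ℝ}
    (hbetween : |y - x i| = |y - x j| + |x j - x i|) :
    h i - L * |y - x i| ≤ h j - L * |y - x j| := by
  have hheights := (le_abs_self _).trans (hL i j)
  rw [abs_sub_comm] at hheights
  rw [hbetween, mul_add]
  linarith

lemma exists_apex_mem_uIcc_tent_le (hL : ∀ i j, |h i - h j| ≤ L * |x i - x j|) {a b : ι} {y : ℝ}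
    (hy : y ∈ Set.uIcc (x a) (x b)) (i : ι) :
    ∃ k, x k ∈ Set.uIcc (x a) (x b) ∧ h i - L * |y - x i| ≤ h k - L * |y - x k| := by
  wlog hab : x a ≤ x b generalizing a b
  · rw [Set.uIcc_comm] at hy ⊢
    exact this hy (le_of_not_ge hab)
  have hy' : y ∈ Set.Icc (x a) (x b) := Set.uIcc_of_le hab ▸ hy
  rcases le_total (x i) (x a) with hia | hai
  · refine ⟨a, Set.left_mem_uIcc, tent_le_tent_of_between hL ?_⟩
    rw [abs_of_nonneg, abs_of_nonneg, abs_of_nonneg] <;> linarith [hy'.1]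
  rcases le_total (x b) (x i) with hbi | hib
  · refine ⟨b, Set.right_mem_uIcc, tent_le_tent_of_between hL ?_⟩
    rw [abs_of_nonpos, abs_of_nonpos, abs_of_nonpos] <;> linarith [hy'.2]
  · exact ⟨i, Set.mem_uIcc_of_le hai hib, le_rfl⟩

lemma tent_le_chord {a b k : ι} (hab : |h b - h a| ≤ L * |x b - x a|)
    (hk : (x b - x a) ^ 2 * h k ≤ (x b - x a) * ((x b - x k) * h a + (x k - x a) * h b)) (y : ℝ) :
    (x b - x a) ^ 2 * (h k - L * |y - x k|)
      ≤ (x b - x a) * ((x b - y) * h a + (y - x a) * h b) := by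
  have hsteep : (x b - x a) * (h b - h a) * (x k - y) ≤ (x b - x a) ^ 2 * (L * |y - x k|) :=
    calc (x b - x a) * (h b - h a) * (x k - y)
        ≤ |x b - x a| * |h b - h a| * |x k - y| := by
          rw [← abs_mul, ← abs_mul]
          exact le_abs_self _
      _ ≤ |x b - x a| * (L * |x b - x a|) * |x k - y| := by gcongr
      _ = (x b - x a) ^ 2 * (L * |y - x k|) := by
          rw [← sq_abs, abs_sub_comm y]
          ring
  linarith

variable [Fintype ι] [Nonempty ι]

/-- The upper envelope of the tents of slope `L` with apexes `(x i, h i)`: a piecewise linear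
terrain, which passes through all the apexes if their heights are `L`-Lipschitz. -/
noncomputable def tentEnvelope (x h : ι → ℝ) (L : ℝ) (y : ℝ) : ℝ :=
  Finset.univ.sup' Finset.univ_nonempty fun i => h i - L * |y - x i|

lemma exists_tentEnvelope_eq (x h : ι → ℝ) (L y : ℝ) :
    ∃ i, tentEnvelope x h L y = h i - L * |y - x i| := by
  simpa [tentEnvelope] using
    Finset.exists_mem_eq_sup' Finset.univ_nonempty fun i => h i - L * |y - x i|

lemma tent_le_tentEnvelope (x h : ι → ℝ) (L y : ℝ) (i : ι) :
    h i - L * |y - x i| ≤ tentEnvelope x h L y :=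
  Finset.le_sup' (fun i => h i - L * |y - x i|) (Finset.mem_univ i)

lemma tentEnvelope_apex (hL : ∀ i j, |h i - h j| ≤ L * |x i - x j|) (j : ι) :
    tentEnvelope x h L (x j) = h j := by
  apply le_antisymm
  · obtain ⟨i, hi⟩ := exists_tentEnvelope_eq x h L (x j)
    simpa [hi] using tent_le_tent_of_between hL (i := i) (j := j) (y := x j) (by simp)
  · simpa using tent_le_tentEnvelope x h L (x j) j

theorem sees_tentEnvelope_iff (hL : ∀ i j, |h i - h j| ≤ L * |x i - x j|) {a b : ι} :
    Sees (tentEnvelope x h L) (x a) (x b) ↔ Unobstructed x h a b := by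
  simp only [sees_iff_unobstructed, Unobstructed, id_eq, tentEnvelope_apex hL]
  constructor
  · intro hclear k hk
    simpa only [tentEnvelope_apex hL] using hclear (x k) hk
  · intro hclear y hy
    obtain ⟨i, hi⟩ := exists_tentEnvelope_eq x h L y
    obtain ⟨k, hk, hik⟩ := exists_apex_mem_uIcc_tent_le hL hy i
    calc (x b - x a) ^ 2 * tentEnvelope x h L y
        ≤ (x b - x a) ^ 2 * (h k - L * |y - x k|) := by
          rw [hi]
          gcongr
      _ ≤ (x b - x a) * ((x b - y) * h a + (y - x a) * h b) :=
          tent_le_chord (hL b a) (hclear k hk) y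

end TentEnvelope

section Instance

/-- The abscissae of the twelve apexes of the terrain. -/
def abscissa (i : Fin 12) : ℤ := (i : ℕ)

/-- The heights of the twelve apexes of the terrain, found by computer search. Consecutive ones
differ by at most `14`, the slope of the tents. -/
def height : Fin 12 → ℤ := ![30, 16, 17, 10, 5, 11, 3, 11, 7, 7, 20, 27]

/-- The terrain of the instance. -/
noncomputable def terrain : ℝ → ℝ :=
  tentEnvelope (fun i => (abscissa i : ℝ)) (fun i => (height i : ℝ)) 14

/-- The apexes carrying the guards. -/
def guardApexes : Finset (Fin 12) := {0, 5, 7, 11}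

/-- The apexes to be guarded. They are seen by the pairs of guards `{0, 11}`, `{5, 11}`, `{0, 5}`,
`{5, 7}`, `{7, 11}` and `{0, 7}`, in this order. -/
def pointApexes : Finset (Fin 12) := {1, 3, 4, 6, 8, 9}

/-- The guards, as a set of abscissae. -/
noncomputable def guards : Finset ℝ := guardApexes.image fun i => (abscissa i : ℝ)

/-- The points to be guarded, as a set of abscissae. -/
noncomputable def points : Finset ℝ := pointApexes.image fun i => (abscissa i : ℝ)

lemma height_lipschitz : ∀ i j, |height i - height j| ≤ 14 * |abscissa i - abscissa j| := by
  decide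

lemma abscissa_injective : Function.Injective fun i => (abscissa i : ℝ) := by
  have hint : Function.Injective abscissa := by decide
  exact Int.cast_injective.comp hint

lemma sees_terrain_iff {a b : Fin 12} :
    Sees terrain (abscissa a) (abscissa b) ↔ Unobstructed abscissa height a b := by
  rw [← unobstructed_intCast]
  exact sees_tentEnvelope_iff (x := fun i => (abscissa i : ℝ))
    (fun i j => by exact_mod_cast height_lipschitz i j)

lemma card_filter_unobstructed : ∀ p ∈ pointApexes,
    (guardApexes.filter (Unobstructed abscissa height · p)).card = 2 := by
  decide

lemma exists_unobstructed_only_from_pair : ∀ g ∈ guardApexes, ∀ g' ∈ guardApexes, g ≠ g' →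
    ∃ p ∈ pointApexes, ∀ k ∈ guardApexes, Unobstructed abscissa height k p → k = g ∨ k = g' := by
  decide

lemma guards_inter_points : guards ∩ points = ∅ := by
  have happexes : guardApexes ∩ pointApexes = ∅ := by decide
  rw [guards, points, ← Finset.image_inter _ _ abscissa_injective, happexes, Finset.image_empty]

lemma card_guards : guards.card = 4 :=
  Finset.card_image_of_injective _ abscissa_injective

lemma card_filter_sees {p : ℝ} (hp : p ∈ points) :
    (guards.filter (Sees terrain · p)).card = 2 := by
  obtain ⟨i, hi, rfl⟩ := Finset.mem_image.1 hp
  rw [guards, Finset.filter_image, Finset.card_image_of_injective _ abscissa_injective]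
  simpa only [sees_terrain_iff] using card_filter_unobstructed i hi

lemma exists_point_seen_only_by_pair : ∀ g ∈ guards, ∀ g' ∈ guards, g ≠ g' →
    ∃ p ∈ points, ∀ k ∈ guards, Sees terrain k p → k = g ∨ k = g' := by
  simp only [guards, points, Finset.forall_mem_image, Finset.exists_mem_image, sees_terrain_iff,
    abscissa_injective.eq_iff, abscissa_injective.ne_iff]
  exact exists_unobstructed_only_from_pair

end Instance

end TerrainGuarding

open TerrainGuarding in
/-- The integrality gap of the covering LP for discrete terrain guarding is at
least `3/2`. -/
theorem integrality_gap_three_halves :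
    ∃ (f : ℝ → ℝ) (G N : Finset ℝ) (x : ℝ → ℝ),
      G ∩ N = ∅ ∧
      (∀ g ∈ G, 0 ≤ x g) ∧
      (∀ p ∈ N, 1 ≤ ∑ g ∈ G, if Sees f g p then x g else 0) ∧
      (∃ A ⊆ G, ∀ p ∈ N, ∃ g ∈ A, Sees f g p) ∧
      (∀ A ⊆ G, (∀ p ∈ N, ∃ g ∈ A, Sees f g p) →
        (3 / 2 : ℝ) * ∑ g ∈ G, x g ≤ (A.card : ℝ)) := by
  refine ⟨terrain, guards, points, fun _ => 1 / 2, guards_inter_points, fun _ _ => by norm_num,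
    fun p hp => one_le_sum_ite_half (card_filter_sees hp).ge,
    ⟨guards, subset_rfl, fun p hp => ?_⟩, fun A hA hcover => ?_⟩
  · have hseen : (guards.filter (Sees terrain · p)).Nonempty := by
      rw [← Finset.card_pos, card_filter_sees hp]
      norm_num
    simpa only [Finset.Nonempty, Finset.mem_filter] using hseen
  · have hcard : guards.card ≤ A.card + 1 :=
      card_le_card_add_one_of_cover exists_point_seen_only_by_pair hA hcover
    rw [card_guards] at hcard
    have hthree : (3 : ℝ) ≤ A.card := by exact_mod_cast Nat.le_of_succ_le_succ hcard
    calc (3 / 2 : ℝ) * ∑ _g ∈ guards, 1 / 2 = 3 := by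
          rw [Finset.sum_const, card_guards]
          norm_num
      _ ≤ A.card := hthree
end
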